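/- Let k ≥ 1, n ≥ 1 and N ≥ n be integers. For γ_1, γ_2 ∈ J_k^{reg}(1,n), one has S_{γ_1} = S_{γ_2} if and only if there exists φ ∈ J_k^{reg}(1,1) such that γ_1 = γ_2 ∘ φ. -/

import Mathlib

open scoped BigOperators

namespace JetPaper

/-- Monomials in `u` variables of degree between `1` and `k`:
these index a basis of `⊕_{j=1}^k Sym^j ℂ^u`. -/
def Mon (u k : ℕ) : Type := {m : Fin u → ℕ // 0 < ∑ i, m i ∧ ∑ i, m i ≤ k}

noncomputable instance (u k : ℕ) : Fintype (Mon u k) :=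
  Fintype.ofInjective
    (fun m : Mon u k => (fun i => (⟨m.1 i, Nat.lt_succ_of_le
        ((Finset.single_le_sum (fun _ _ => Nat.zero_le _) (Finset.mem_univ i)).trans
          m.2.2)⟩ : Fin (k + 1))))
    (fun m m' h => Subtype.ext (funext fun i => congrArg Fin.val (congrFun h i)))

/-- The space `J_k(u,v)` of `k`-jets at the origin of holomorphic maps `(ℂ^u,0) → (ℂ^v,0)`,
described by the coefficients (indexed by monomials of degree `1,…,k` in `u` variables)
of the `v` coordinate polynomials. -/
abbrev Jet (k u v : ℕ) : Type := Fin v → Mon u k → ℂ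

/-- The tuple of coordinate polynomials of a jet. -/
noncomputable def toPoly {k u v : ℕ} (γ : Jet k u v) : Fin v → MvPolynomial (Fin u) ℂ :=
  fun i => ∑ m : Mon u k, MvPolynomial.monomial (Finsupp.equivFunOnFinite.symm m.1) (γ i m)

/-- Composition of jets `Ψ ∘ γ`: substitution of the coordinate polynomials of `γ` into
those of `Ψ`, followed by deletion of all terms of degree greater than `k`
(only the coefficients of monomials of degree `1,…,k` are recorded). -/
noncomputable def jetComp {k u v w : ℕ} (Ψ : Jet k v w) (γ : Jet k u v) : Jet k u w :=
  fun i m => MvPolynomial.coeff (Finsupp.equivFunOnFinite.symm m.1)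
    (MvPolynomial.aeval (toPoly γ) (toPoly Ψ i))

/-- The linear part of a jet, as a matrix. -/
noncomputable def linPart {k u v : ℕ} (γ : Jet k u v) : Matrix (Fin v) (Fin u) ℂ :=
  fun i j => MvPolynomial.coeff (Finsupp.single j 1) (toPoly γ i)

/-!
Write `𝔪` for the ideal of polynomials without constant term, so that a jet is a tuple of classes in
`𝔪 / 𝔪 ^ (k + 1)`. If the linear part of `φ` is the identity, then precomposition with `φ` differs
from the identity by a map sending each `𝔪 ^ l` into `𝔪 ^ (l + 1)`, so it is injective, hence
bijective. Composing a regular jet with a linear left inverse of its linear part reduces to this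
case, so a jet is regular if and only if it has a left inverse.

Let `ρ` be a left inverse of `γ₂`. The jet `id - γ₂ ∘ ρ` kills `γ₂`, so if the solution spaces agree
it also kills `γ₁`, which says `γ₁ = γ₂ ∘ φ` with `φ = ρ ∘ γ₁`. Moreover `f ∘ φ = (f ∘ ρ) ∘ γ₁`
vanishes only if `(f ∘ ρ) ∘ γ₂ = f` does, so precomposition with `φ` is injective and `φ` is
regular.
-/

open MvPolynomial

theorem exists_mul_eq_one_of_mulVec_injective {K m n : Type*} [Field K] [Fintype m] [Fintype n]
    [DecidableEq n] {M : Matrix m n K} (hM : Function.Injective M.mulVec) :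
    ∃ L : Matrix n m K, L * M = 1 := by
  classical
  obtain ⟨f, hf⟩ := M.toLin'.exists_leftInverse_of_injective (LinearMap.ker_eq_bot.mpr hM)
  exact ⟨f.toMatrix', by simpa [LinearMap.toMatrix'_comp] using congrArg LinearMap.toMatrix' hf⟩

section IdealOfVars

variable {R A σ : Type*} [CommRing R] [CommRing A] [Algebra R A] {J : Ideal A} {g h : σ → A}

theorem aeval_mem_pow_of_mem (hg : ∀ i, g i ∈ J) {l : ℕ} {p : MvPolynomial σ R}
    (hp : p ∈ idealOfVars σ R ^ l) : aeval g p ∈ J ^ l := by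
  have hmap : (idealOfVars σ R).map (aeval g) ≤ J := by
    rw [Ideal.map_span, Ideal.span_le]
    rintro _ ⟨_, ⟨i, rfl⟩, rfl⟩
    simpa using hg i
  have hmem := Ideal.mem_map_of_mem (aeval g) hp
  rw [Ideal.map_pow] at hmem
  exact Ideal.pow_right_mono hmap l hmem

theorem aeval_mem_of_mem (hg : ∀ i, g i ∈ J) {p : MvPolynomial σ R}
    (hp : p ∈ idealOfVars σ R) : aeval g p ∈ J :=
  pow_one J ▸ aeval_mem_pow_of_mem hg (l := 1) ((pow_one (idealOfVars σ R)).symm ▸ hp)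

theorem aeval_sub_aeval_mem (hgh : ∀ i, g i - h i ∈ J) (p : MvPolynomial σ R) :
    aeval g p - aeval h p ∈ J := by
  have heq : (Ideal.Quotient.mkₐ R J).comp (aeval g) = (Ideal.Quotient.mkₐ R J).comp (aeval h) :=
    algHom_ext fun i => by simpa using Ideal.Quotient.eq.mpr (hgh i)
  exact Ideal.Quotient.eq.mp (DFunLike.congr_fun heq p)

theorem aeval_sub_aeval_mem_pow_add {d : ℕ} (hg : ∀ i, g i ∈ J) (hh : ∀ i, h i ∈ J)
    (hgh : ∀ i, g i - h i ∈ J ^ (d + 1)) {l : ℕ} {p : MvPolynomial σ R}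
    (hp : p ∈ idealOfVars σ R ^ l) : aeval g p - aeval h p ∈ J ^ (l + d) := by
  induction l generalizing p with
  | zero =>
    rw [zero_add]
    exact Ideal.pow_le_pow_right d.le_succ (aeval_sub_aeval_mem hgh p)
  | succ l ih =>
    rw [pow_succ'] at hp
    induction hp using Submodule.mul_induction_on' with
    | mem_mul_mem a ha b hb =>
      have hleft : aeval g a * (aeval g b - aeval h b) ∈ J ^ (l + 1 + d) := by
        rw [add_right_comm, pow_succ']
        exact Ideal.mul_mem_mul (aeval_mem_of_mem hg ha) (ih hb)
      have hright : (aeval g a - aeval h a) * aeval h b ∈ J ^ (l + 1 + d) := by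
        rw [add_assoc, add_comm 1 d, add_comm l, pow_add]
        exact Ideal.mul_mem_mul (aeval_sub_aeval_mem hgh a) (aeval_mem_pow_of_mem hh hb)
      convert add_mem hleft hright using 1
      simp only [map_mul]
      ring
    | add a _ b _ iha ihb =>
      simpa only [map_add, add_sub_add_comm] using add_mem iha ihb

theorem X_mem_idealOfVars (i : σ) : X i ∈ idealOfVars σ R :=
  Ideal.subset_span ⟨i, rfl⟩

theorem mem_pow_idealOfVars_of_aeval_mem {q : σ → MvPolynomial σ R}
    (hq : ∀ i, q i - X i ∈ idealOfVars σ R ^ 2) {l : ℕ} {p : MvPolynomial σ R}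
    (hp : aeval q p ∈ idealOfVars σ R ^ l) : p ∈ idealOfVars σ R ^ l := by
  have hmem (i : σ) : q i ∈ idealOfVars σ R :=
    (Submodule.sub_mem_iff_left _ (X_mem_idealOfVars i)).mp (Ideal.pow_le_self two_ne_zero (hq i))
  induction l with
  | zero => simp
  | succ l ih =>
    have hdiff := aeval_sub_aeval_mem_pow_add (d := 1) hmem X_mem_idealOfVars hq
      (ih (Ideal.pow_le_pow_right l.le_succ hp))
    rwa [aeval_X_left_apply, Submodule.sub_mem_iff_right _ hp] at hdiff

theorem mem_idealOfVars_iff {p : MvPolynomial σ R} :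
    p ∈ idealOfVars σ R ↔ coeff 0 p = 0 := by
  rw [← pow_one (idealOfVars σ R), mem_pow_idealOfVars_iff']
  simp only [Nat.lt_one_iff, Finsupp.degree_eq_zero_iff, forall_eq]

theorem mem_idealOfVars_sq_iff {p : MvPolynomial σ R} (hp : p ∈ idealOfVars σ R) :
    p ∈ idealOfVars σ R ^ 2 ↔ ∀ i, coeff (Finsupp.single i 1) p = 0 := by
  rw [mem_pow_idealOfVars_iff']
  refine ⟨fun h i => h _ (by simp), fun h x hx => ?_⟩
  obtain hx₀ | hx₁ : x.degree = 0 ∨ x.degree = 1 := by omega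
  · rw [(Finsupp.degree_eq_zero_iff x).mp hx₀, mem_idealOfVars_iff.mp hp]
  · obtain ⟨i, rfl⟩ : x ∈ Set.range fun i : σ => Finsupp.single i 1 :=
      Finsupp.range_single_one.symm ▸ hx₁
    exact h i

variable [Fintype σ]

theorem sum_C_mul_X_mem_idealOfVars (c : σ → R) : ∑ i, C (c i) * X i ∈ idealOfVars σ R :=
  sum_mem fun i _ => Ideal.mul_mem_left _ _ (X_mem_idealOfVars i)

theorem coeff_single_sum_C_mul_X (c : σ → R) (i : σ) :
    coeff (Finsupp.single i 1) (∑ j, C (c j) * X j) = c i := by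
  classical
  simp [coeff_sum, coeff_C_mul, coeff_X, Finsupp.single_left_inj]

theorem coeff_single_aeval {τ : Type*} {q : σ → MvPolynomial τ R}
    (hq : ∀ i, q i ∈ idealOfVars τ R) {p : MvPolynomial σ R} (hp : p ∈ idealOfVars σ R) (t : τ) :
    coeff (Finsupp.single t 1) (aeval q p) =
      ∑ i, coeff (Finsupp.single i 1) p * coeff (Finsupp.single t 1) (q i) := by
  let ℓ : MvPolynomial σ R := ∑ i, C (coeff (Finsupp.single i 1) p) * X i
  have hsub : p - ℓ ∈ idealOfVars σ R := sub_mem hp (sum_C_mul_X_mem_idealOfVars _)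
  have hsq : p - ℓ ∈ idealOfVars σ R ^ 2 := (mem_idealOfVars_sq_iff hsub).mpr fun i => by
    rw [coeff_sub, coeff_single_sum_C_mul_X, sub_self]
  have hlin := (mem_idealOfVars_sq_iff (aeval_mem_of_mem hq hsub)).mp
    (aeval_mem_pow_of_mem hq hsq) t
  rw [map_sub, coeff_sub, sub_eq_zero] at hlin
  simpa [ℓ, coeff_sum, algebraMap_eq, coeff_C_mul] using hlin

end IdealOfVars

section JetOfPoly

variable {k u v w : ℕ}

/-- The `k`-jet at the origin of a polynomial map. Since jets vanish at the origin, constant terms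
are discarded, so this is meaningful for `p` with values in `idealOfVars`. -/
noncomputable def jetOfPoly (k : ℕ) (p : Fin v → MvPolynomial (Fin u) ℂ) : Jet k u v :=
  fun i m => coeff (Finsupp.equivFunOnFinite.symm m.1) (p i)

theorem mem_idealOfVars_pow_succ_iff {p : MvPolynomial (Fin u) ℂ}
    (hp : p ∈ idealOfVars (Fin u) ℂ) :
    p ∈ idealOfVars (Fin u) ℂ ^ (k + 1) ↔
      ∀ m : Mon u k, coeff (Finsupp.equivFunOnFinite.symm m.1) p = 0 := by
  rw [mem_pow_idealOfVars_iff']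
  refine ⟨fun h m => h _ ?_, fun h x hx => ?_⟩
  · simpa [Finsupp.degree_eq_sum] using Nat.lt_succ_of_le m.2.2
  · rcases eq_or_ne x 0 with rfl | hx₀
    · exact mem_idealOfVars_iff.mp hp
    · have hpos : 0 < x.degree := Nat.pos_of_ne_zero fun h => hx₀ (x.degree_eq_zero_iff.mp h)
      rw [Finsupp.degree_eq_sum] at hx hpos
      simpa using h ⟨x, hpos, Nat.le_of_lt_succ hx⟩

theorem toPoly_mem_idealOfVars (γ : Jet k u v) (i : Fin v) :
    toPoly γ i ∈ idealOfVars (Fin u) ℂ := by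
  classical
  rw [mem_idealOfVars_iff, toPoly, coeff_sum]
  refine Finset.sum_eq_zero fun m _ => ?_
  rw [coeff_monomial, if_neg]
  intro hm
  have hsum := m.2.1
  simp [(Equiv.symm_apply_eq _).mp hm] at hsum

theorem jetOfPoly_toPoly (γ : Jet k u v) : jetOfPoly k (toPoly γ) = γ := by
  classical
  funext i m
  simp only [jetOfPoly, toPoly, coeff_sum, coeff_monomial, EmbeddingLike.apply_eq_iff_eq]
  rw [Finset.sum_eq_single m (fun m' _ hm' => if_neg (Subtype.coe_injective.ne hm')) (by simp),
    if_pos rfl]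

theorem jetOfPoly_eq_iff {p q : Fin v → MvPolynomial (Fin u) ℂ}
    (hp : ∀ i, p i ∈ idealOfVars (Fin u) ℂ) (hq : ∀ i, q i ∈ idealOfVars (Fin u) ℂ) :
    jetOfPoly k p = jetOfPoly k q ↔ ∀ i, p i - q i ∈ idealOfVars (Fin u) ℂ ^ (k + 1) := by
  simp only [mem_idealOfVars_pow_succ_iff (sub_mem (hp _) (hq _)), coeff_sub, sub_eq_zero,
    funext_iff, jetOfPoly]

theorem toPoly_jetOfPoly_sub_mem {p : Fin v → MvPolynomial (Fin u) ℂ}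
    (hp : ∀ i, p i ∈ idealOfVars (Fin u) ℂ) (i : Fin v) :
    toPoly (jetOfPoly k p) i - p i ∈ idealOfVars (Fin u) ℂ ^ (k + 1) :=
  (jetOfPoly_eq_iff (toPoly_mem_idealOfVars _) hp).mp (jetOfPoly_toPoly _) i

theorem jetComp_jetOfPoly {p : Fin w → MvPolynomial (Fin v) ℂ} {q : Fin v → MvPolynomial (Fin u) ℂ}
    (hp : ∀ i, p i ∈ idealOfVars (Fin v) ℂ) (hq : ∀ i, q i ∈ idealOfVars (Fin u) ℂ) :
    jetComp (jetOfPoly k p) (jetOfPoly k q) = jetOfPoly k fun i => aeval q (p i) := by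
  refine (jetOfPoly_eq_iff (fun i => ?_) fun i => aeval_mem_of_mem hq (hp i)).mpr fun i => ?_
  · exact aeval_mem_of_mem (toPoly_mem_idealOfVars _) (toPoly_mem_idealOfVars _ i)
  · have houter := aeval_mem_pow_of_mem (toPoly_mem_idealOfVars (jetOfPoly k q))
      (toPoly_jetOfPoly_sub_mem (k := k) hp i)
    have hinner := aeval_sub_aeval_mem (toPoly_jetOfPoly_sub_mem (k := k) hq) (p i)
    rw [map_sub] at houter
    simpa only [sub_add_sub_cancel] using add_mem houter hinner

theorem linPart_jetOfPoly (hk : 1 ≤ k) {p : Fin v → MvPolynomial (Fin u) ℂ}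
    (hp : ∀ i, p i ∈ idealOfVars (Fin u) ℂ) (i : Fin v) (j : Fin u) :
    linPart (jetOfPoly k p) i j = coeff (Finsupp.single j 1) (p i) := by
  rw [linPart, ← sub_eq_zero, ← coeff_sub]
  refine (mem_pow_idealOfVars_iff' _ _).mp (toPoly_jetOfPoly_sub_mem (k := k) hp i) _ ?_
  rw [Finsupp.degree_single]
  omega

end JetOfPoly

section Composition

variable {k u v w : ℕ}

theorem jetComp_assoc {x : ℕ} (Ψ : Jet k w x) (γ : Jet k v w) (φ : Jet k u v) :
    jetComp (jetComp Ψ γ) φ = jetComp Ψ (jetComp γ φ) := by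
  have hφ := toPoly_mem_idealOfVars φ
  have hγ := toPoly_mem_idealOfVars γ
  have hΨ := toPoly_mem_idealOfVars Ψ
  rw [← jetOfPoly_toPoly Ψ, ← jetOfPoly_toPoly γ, ← jetOfPoly_toPoly φ,
    jetComp_jetOfPoly hΨ hγ, jetComp_jetOfPoly hγ hφ,
    jetComp_jetOfPoly (fun i => aeval_mem_of_mem hγ (hΨ i)) hφ,
    jetComp_jetOfPoly hΨ fun i => aeval_mem_of_mem hφ (hγ i)]
  simp only [← comp_aeval_apply]

/-- The jet of the identity map of `ℂ^u`. -/
noncomputable def idJet (k u : ℕ) : Jet k u u := jetOfPoly k X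

theorem jetComp_idJet (γ : Jet k u v) : jetComp γ (idJet k u) = γ := by
  conv_lhs => rw [← jetOfPoly_toPoly γ, idJet, jetComp_jetOfPoly (toPoly_mem_idealOfVars γ)
    X_mem_idealOfVars]
  simp only [aeval_X_left_apply, jetOfPoly_toPoly]

theorem idJet_jetComp (γ : Jet k u v) : jetComp (idJet k v) γ = γ := by
  conv_lhs => rw [← jetOfPoly_toPoly γ, idJet, jetComp_jetOfPoly X_mem_idealOfVars
    (toPoly_mem_idealOfVars γ)]
  simp only [aeval_X, jetOfPoly_toPoly]

theorem linPart_jetComp (hk : 1 ≤ k) (Ψ : Jet k v w) (γ : Jet k u v) :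
    linPart (jetComp Ψ γ) = linPart Ψ * linPart γ := by
  have hγ := toPoly_mem_idealOfVars γ
  have hΨ := toPoly_mem_idealOfVars Ψ
  ext i j
  calc linPart (jetComp Ψ γ) i j = coeff (Finsupp.single j 1) (aeval (toPoly γ) (toPoly Ψ i)) :=
        linPart_jetOfPoly hk (fun i => aeval_mem_of_mem hγ (hΨ i)) i j
    _ = (linPart Ψ * linPart γ) i j := coeff_single_aeval hγ (hΨ i) j

theorem exists_linPart_eq (hk : 1 ≤ k) (L : Matrix (Fin v) (Fin u) ℂ) :
    ∃ γ : Jet k u v, linPart γ = L := by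
  refine ⟨jetOfPoly k fun i => ∑ j, C (L i j) * X j, ?_⟩
  ext i j
  rw [linPart_jetOfPoly hk fun i => sum_C_mul_X_mem_idealOfVars (L i), coeff_single_sum_C_mul_X]

theorem linPart_idJet (hk : 1 ≤ k) : linPart (idJet k u) = 1 := by
  ext i j
  rw [idJet, linPart_jetOfPoly hk X_mem_idealOfVars]
  simp [coeff_X, Finsupp.single_left_inj, Matrix.one_apply]

/-- Precomposition `Ψ ↦ Ψ ∘ γ` with a jet, as a linear map. -/
noncomputable def precomp (w : ℕ) (γ : Jet k u v) : Jet k v w →ₗ[ℂ] Jet k u w where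
  toFun Ψ := jetComp Ψ γ
  map_add' Ψ Φ := by
    funext i m
    simp [jetComp, toPoly, Finset.sum_add_distrib]
  map_smul' c Ψ := by
    funext i m
    have hsmul : toPoly (c • Ψ) i = c • toPoly Ψ i := by
      simp [toPoly, Finset.smul_sum, smul_monomial]
    simp [jetComp, hsmul]

end Composition

section Regular

variable {k u v : ℕ}

theorem precomp_injective_of_linPart_eq_one (hk : 1 ≤ k) (w : ℕ) {φ : Jet k u u}
    (hφ : linPart φ = 1) : Function.Injective (precomp w φ) := by
  refine (injective_iff_map_eq_zero _).mpr fun f (hf : jetComp f φ = 0) => ?_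
  have hsq (i : Fin u) : toPoly φ i - X i ∈ idealOfVars (Fin u) ℂ ^ 2 := by
    rw [mem_idealOfVars_sq_iff (sub_mem (toPoly_mem_idealOfVars φ i) (X_mem_idealOfVars i))]
    intro j
    rw [coeff_sub, ← linPart_jetOfPoly hk X_mem_idealOfVars, sub_eq_zero]
    exact congrFun (congrFun (hφ.trans (linPart_idJet hk).symm) i) j
  funext i
  have hcomp : aeval (toPoly φ) (toPoly f i) ∈ idealOfVars (Fin u) ℂ ^ (k + 1) :=
    (mem_idealOfVars_pow_succ_iff (aeval_mem_of_mem (toPoly_mem_idealOfVars φ)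
      (toPoly_mem_idealOfVars f i))).mpr (congrFun (congrFun hf i))
  rw [← jetOfPoly_toPoly f]
  exact funext ((mem_idealOfVars_pow_succ_iff (toPoly_mem_idealOfVars f i)).mp
    (mem_pow_idealOfVars_of_aeval_mem hsq hcomp))

/-- A jet is regular if its linear part is injective, that is, if it is the jet of an immersion. -/
def IsRegular (γ : Jet k u v) : Prop := Function.Injective (linPart γ).mulVec

theorem isRegular_iff_linPart_ne_zero {γ : Jet k 1 v} : IsRegular γ ↔ linPart γ ≠ 0 := by
  rw [IsRegular, Matrix.mulVec_injective_iff, linearIndependent_unique_iff]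
  simp [funext_iff, ← Matrix.ext_iff, Fin.forall_fin_one]

theorem isRegular_iff_exists_leftInverse (hk : 1 ≤ k) {γ : Jet k u v} :
    IsRegular γ ↔ ∃ ρ : Jet k v u, jetComp ρ γ = idJet k u := by
  constructor
  · intro hγ
    obtain ⟨L, hL⟩ := exists_mul_eq_one_of_mulVec_injective hγ
    obtain ⟨ℓ, rfl⟩ := exists_linPart_eq hk L
    have hinj : Function.Injective (precomp u (jetComp ℓ γ)) :=
      precomp_injective_of_linPart_eq_one hk u (by rw [linPart_jetComp hk, hL])
    obtain ⟨ψ, hψ⟩ := LinearMap.injective_iff_surjective.mp hinj (idJet k u)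
    exact ⟨jetComp ψ ℓ, (jetComp_assoc ψ ℓ γ).trans hψ⟩
  · rintro ⟨ρ, hρ⟩
    have hmul : linPart ρ * linPart γ = 1 := by
      rw [← linPart_jetComp hk, hρ, linPart_idJet hk]
    refine Function.LeftInverse.injective (g := (linPart ρ).mulVec) fun x => ?_
    rw [Matrix.mulVec_mulVec, hmul, Matrix.one_mulVec]

theorem IsRegular.precomp_injective (hk : 1 ≤ k) (w : ℕ) {φ : Jet k u u} (hφ : IsRegular φ) :
    Function.Injective (precomp w φ) := by
  obtain ⟨ρ, hρ⟩ := (isRegular_iff_exists_leftInverse hk).mp hφ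
  refine LinearMap.injective_iff_surjective.mpr fun Ψ => ⟨jetComp Ψ ρ, ?_⟩
  exact (jetComp_assoc Ψ ρ φ).trans (by rw [hρ, jetComp_idJet])

theorem isRegular_of_precomp_injective (hk : 1 ≤ k) {φ : Jet k u u}
    (hφ : Function.Injective (precomp u φ)) : IsRegular φ :=
  (isRegular_iff_exists_leftInverse hk).mpr
    (LinearMap.injective_iff_surjective.mp hφ (idJet k u))

end Regular

section SolutionSpace

variable {k u n N : ℕ} {γ₁ γ₂ : Jet k u n}

/-- The space `S_γ` of systems of `N` equations solved by the jet `γ`. -/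
def solutionSpace (N : ℕ) (γ : Jet k u n) : Set (Jet k n N) := {Ψ | jetComp Ψ γ = 0}

-- Each component of `Ψ ∘ γ` depends only on the same component of `Ψ`.
theorem jetComp_eq_zero_iff_of_solutionSpace_eq (hN : 0 < N)
    (hS : solutionSpace N γ₁ = solutionSpace N γ₂) {w : ℕ} (F : Jet k n w) :
    jetComp F γ₁ = 0 ↔ jetComp F γ₂ = 0 := by
  have hrow (γ : Jet k u n) :
      jetComp F γ = 0 ↔ ∀ i, jetComp (fun _ : Fin N => F i) γ = 0 :=
    ⟨fun h i => funext fun _ => congrFun h i, fun h => funext fun i => congrFun (h i) ⟨0, hN⟩⟩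
  rw [hrow, hrow]
  exact forall_congr' fun i => Set.ext_iff.mp hS fun _ => F i

theorem solutionSpace_jetComp (hk : 1 ≤ k) (γ : Jet k u n) {φ : Jet k u u}
    (hφ : IsRegular φ) : solutionSpace N (jetComp γ φ) = solutionSpace N γ := by
  ext Ψ
  rw [solutionSpace, Set.mem_ofPred_eq, ← jetComp_assoc]
  exact map_eq_zero_iff (precomp N φ) (hφ.precomp_injective hk N)

theorem solution_space_eq_iff_general (hk : 1 ≤ k) (hN : 0 < N) (hγ₂ : IsRegular γ₂) :
    solutionSpace N γ₁ = solutionSpace N γ₂ ↔ ∃ φ : Jet k u u, IsRegular φ ∧ γ₁ = jetComp γ₂ φ := by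
  constructor
  · intro hS
    have hker {w : ℕ} (F : Jet k n w) : jetComp F γ₁ = 0 ↔ jetComp F γ₂ = 0 :=
      jetComp_eq_zero_iff_of_solutionSpace_eq hN hS F
    obtain ⟨ρ, hρ⟩ := (isRegular_iff_exists_leftInverse hk).mp hγ₂
    refine ⟨jetComp ρ γ₁, isRegular_of_precomp_injective hk ?_, ?_⟩
    · refine (injective_iff_map_eq_zero _).mpr fun f (hf : jetComp f (jetComp ρ γ₁) = 0) => ?_
      rwa [← jetComp_assoc, hker, jetComp_assoc, hρ, jetComp_idJet] at hf
    · have hsub (γ : Jet k u n) : jetComp (idJet k n - jetComp γ₂ ρ) γ =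
          γ - jetComp γ₂ (jetComp ρ γ) := by
        rw [← jetComp_assoc]
        exact (map_sub (precomp n γ) _ _).trans (congrArg (· - _) (idJet_jetComp γ))
      have hkill : jetComp (idJet k n - jetComp γ₂ ρ) γ₂ = 0 := by
        rw [hsub, hρ, jetComp_idJet, sub_self]
      rwa [← hker, hsub, sub_eq_zero] at hkill
  · rintro ⟨φ, hφ, rfl⟩
    exact solutionSpace_jetComp hk γ₂ hφ

end SolutionSpace

/-- For `γ₁, γ₂ ∈ J_k^{reg}(1,n)`, one has `S_{γ₁} = S_{γ₂}` if and only if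
there exists `φ ∈ J_k^{reg}(1,1)` with `γ₁ = γ₂ ∘ φ`. -/
theorem solution_space_eq_iff (k n N : ℕ) (hk : 1 ≤ k) (hn : 1 ≤ n) (hN : n ≤ N)
    (γ₁ γ₂ : Jet k 1 n) (hγ₁ : linPart γ₁ ≠ 0) (hγ₂ : linPart γ₂ ≠ 0) :
    {Ψ : Jet k n N | jetComp Ψ γ₁ = 0} = {Ψ : Jet k n N | jetComp Ψ γ₂ = 0} ↔
      ∃ φ : Jet k 1 1, linPart φ ≠ 0 ∧ γ₁ = jetComp γ₂ φ := by
  simpa only [solutionSpace, isRegular_iff_linPart_ne_zero] using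
    solution_space_eq_iff_general (γ₁ := γ₁) hk (hn.trans hN)
      (isRegular_iff_linPart_ne_zero.mpr hγ₂)

end JetPaper
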